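/- arXiv:1111.2456 — 6 statements merged into one kernel-verified Lean document; each statement's English description precedes it below -/
import Mathlib

section
/- Let N ≥ 2 be an integer and let v̄, μ : Fin N → ℝ with v̄ i > 0, 0 ≤ μ i < v̄ i for all i, and ∑ i, μ i / v̄ i < 1. Consider the set Y = {v : Fin N → ℝ | ∑ i, v i / v̄ i = 1 and v i ≥ μ i for all i}. Then the maximum over v ∈ Y of min_{i} (v̄ i - v i) / (v̄ i - μ i) exists and equals (N - 1) / (N - ∑ i, μ i / v̄ i); in particular it is attained at the unique v ∈ Y with (v̄ i - v i)/(v̄ i - μ i) equal for all i. -/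
/-!
Put `w i = (vb i - μ i) / vb i > 0` and `r i = (vb i - v i) / (vb i - μ i)`. Then
`w i * r i = 1 - v i / vb i`, so on the hyperplane `∑ i, v i / vb i = 1` the weighted sum
`∑ i, w i * r i` is the constant `N - 1`, while `∑ i, w i = N - ∑ i, μ i / vb i`.
The value `(N - 1) / (N - ∑ i, μ i / vb i)` is therefore the weighted average of the ratios `r i`
for every `v`: it bounds their minimum from above, and it is their common value if they are all
equal. Solving `r i = c` for this constant `c` gives `v i = vb i - c * (vb i - μ i)`, which lies
above `μ` because `c ≤ 1`.
-/

/-- The weights `(vb i - μ i) / vb i` turn the sum of the ratios into an affine function of `v`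
that is constant on the hyperplane. -/
lemma sum_weight_mul_ratio {N : ℕ} {vb μ v : Fin N → ℝ}
    (hvb : ∀ i, 0 < vb i) (hμ : ∀ i, μ i < vb i) (hv : ∑ i, v i / vb i = 1) :
    ∑ i, (vb i - μ i) / vb i * ((vb i - v i) / (vb i - μ i)) = (N : ℝ) - 1 := by
  have h : ∀ i, (vb i - μ i) / vb i * ((vb i - v i) / (vb i - μ i)) = 1 - v i / vb i := by
    intro i
    have h1 := (hvb i).ne'
    have h2 := (sub_pos.2 (hμ i)).ne'
    field_simp
  simp [h, Finset.sum_sub_distrib, hv]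

lemma sum_weight {N : ℕ} {vb μ : Fin N → ℝ} (hvb : ∀ i, 0 < vb i) :
    ∑ i, (vb i - μ i) / vb i = (N : ℝ) - ∑ i, μ i / vb i := by
  have h : ∀ i, (vb i - μ i) / vb i = 1 - μ i / vb i := fun i => by
    rw [sub_div, div_self (hvb i).ne']
  simp [h, Finset.sum_sub_distrib]

/-- 'Type-1' part of the proof of Lemma 2: over the slice
`Y = {v | ∑ i, v i / vb i = 1 ∧ ∀ i, μ i ≤ v i}`, the maximum of
`min_i (vb i - v i)/(vb i - μ i)` exists and equals `(N-1)/(N - ∑ i, μ i / vb i)`;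
it is attained at the unique `v ∈ Y` with all ratios equal. -/
theorem stmt_2 (N : ℕ) (hN : 2 ≤ N) (vb μ : Fin N → ℝ)
    (hvb : ∀ i, 0 < vb i) (hμ0 : ∀ i, 0 ≤ μ i) (hμ : ∀ i, μ i < vb i)
    (hsum : ∑ i, μ i / vb i < 1) :
    IsGreatest { m : ℝ | ∃ v : Fin N → ℝ,
        (∑ i, v i / vb i = 1 ∧ ∀ i, μ i ≤ v i) ∧
        m = ⨅ i, (vb i - v i) / (vb i - μ i) }
      (((N : ℝ) - 1) / ((N : ℝ) - ∑ i, μ i / vb i)) ∧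
    (∃! v : Fin N → ℝ,
        (∑ i, v i / vb i = 1 ∧ ∀ i, μ i ≤ v i) ∧
        ∀ i j, (vb i - v i) / (vb i - μ i) = (vb j - v j) / (vb j - μ j)) ∧
    (∀ v : Fin N → ℝ,
        (∑ i, v i / vb i = 1 ∧ ∀ i, μ i ≤ v i) →
        (∀ i j, (vb i - v i) / (vb i - μ i) = (vb j - v j) / (vb j - μ j)) →
        (⨅ i, (vb i - v i) / (vb i - μ i)) =
          ((N : ℝ) - 1) / ((N : ℝ) - ∑ i, μ i / vb i)) := by
  have hN2 : (2 : ℝ) ≤ N := by exact_mod_cast hN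
  haveI : Nonempty (Fin N) := ⟨⟨0, by omega⟩⟩
  have hD : 0 < (N : ℝ) - ∑ i, μ i / vb i := by linarith
  have hd : ∀ i, 0 < vb i - μ i := fun i => sub_pos.2 (hμ i)
  set c : ℝ := ((N : ℝ) - 1) / ((N : ℝ) - ∑ i, μ i / vb i) with hc
  have hcD : c * ((N : ℝ) - ∑ i, μ i / vb i) = (N : ℝ) - 1 := div_mul_cancel₀ _ hD.ne'
  have hc1 : c ≤ 1 := by
    rw [hc, div_le_one hD]
    linarith
  -- Ratios that are all equal agree with their weighted average `c`.
  have key : ∀ v : Fin N → ℝ, ∑ i, v i / vb i = 1 →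
      (∀ i j, (vb i - v i) / (vb i - μ i) = (vb j - v j) / (vb j - μ j)) →
      ∀ i, (vb i - v i) / (vb i - μ i) = c := by
    intro v hv he i
    have h := sum_weight_mul_ratio hvb hμ hv
    rw [Finset.sum_congr rfl (fun j _ => by rw [he j i]), ← Finset.sum_mul, sum_weight hvb] at h
    rw [hc, eq_div_iff hD.ne', mul_comm]
    exact h
  have hr : ∀ i, (vb i - (vb i - c * (vb i - μ i))) / (vb i - μ i) = c := fun i => by
    rw [sub_sub_cancel, mul_div_cancel_right₀ _ (hd i).ne']
  have hY : ∑ i, (vb i - c * (vb i - μ i)) / vb i = 1 ∧ ∀ i, μ i ≤ vb i - c * (vb i - μ i) := by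
    refine ⟨?_, fun i => by nlinarith [hd i]⟩
    have h : ∀ i, (vb i - c * (vb i - μ i)) / vb i = 1 - c * ((vb i - μ i) / vb i) := fun i => by
      rw [sub_div, div_self (hvb i).ne', mul_div_assoc]
    simp only [h, Finset.sum_sub_distrib, ← Finset.mul_sum, sum_weight hvb, hcD]
    simp
  refine ⟨⟨⟨fun i => vb i - c * (vb i - μ i), hY, ?_⟩, ?_⟩,
    ⟨fun i => vb i - c * (vb i - μ i), ⟨hY, fun i j => (hr i).trans (hr j).symm⟩, ?_⟩, ?_⟩
  · simp only [hr, ciInf_const]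
  · rintro m ⟨v, ⟨hv, -⟩, rfl⟩
    rw [hc, le_div_iff₀ hD, ← sum_weight hvb, ← sum_weight_mul_ratio hvb hμ hv, mul_comm,
      Finset.sum_mul]
    refine Finset.sum_le_sum fun i _ => mul_le_mul_of_nonneg_left ?_ (div_pos (hd i) (hvb i)).le
    exact ciInf_le (Set.finite_range _).bddBelow i
  · rintro v ⟨⟨hv, -⟩, he⟩
    funext i
    have h := (div_eq_iff (hd i).ne').1 (key v hv he i)
    change v i = vb i - c * (vb i - μ i)
    linarith
  · rintro v ⟨hv, -⟩ he
    simp only [key v hv he, ciInf_const]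
end

section
/- Let N ≥ 2 be an integer, and let v̄, μ, v̲ : Fin N → ℝ with v̄ j > 0, v̲ j < μ j < v̄ j for all j, and ∑ j, μ j / v̄ j < 1. For each ordered pair i ≠ j let y i j ∈ ℝ satisfy μ j ≤ y i j ≤ v̄ j. Define Y = {v : Fin N → ℝ | ∑ k, v k / v̄ k = 1 and v k ≥ μ k for all k}, and for v ∈ Y define x i i (v) = (v̄ i - v i) / (v̄ i - μ i) and, for j ≠ i, x i j (v) = (y i j - v j) / (y i j - v̲ j). Then the maximum over v ∈ Y of min_{i} max_{j} x i j (v) exists and equals max{ (N - 1) / (N - ∑ k, μ k / v̄ k), max_{i} max_{j ≠ i} (y i j - μ j) / (y i j - v̲ j) }. -/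
/-!
Normalize by `a k = v k / vb k` and `m k = μ k / vb k`, so that `x i i (v) = (1 - a i) / (1 - m i)`.

*Upper bound.* On `Y` the numerators `1 - a i` add up to `N - 1` and the denominators `1 - m i` to
`N - ∑ m`, so some index `i` has `x i i (v) ≤ (N - 1) / (N - ∑ m)`. For that same `i`, every
off-diagonal `x i j (v)` is at most `(y i j - μ j) / (y i j - vl j)` because `μ j ≤ v j`.

*Attainment.* If the first term is the larger one, the point of `Y` where all `x i i (v)` are equal
has the common value `(N - 1) / (N - ∑ m)`. Otherwise let `(i, j)` attain the second term and take
the vertex of `Y` with `v k = μ k` for all `k ≠ i`: there `x k k (v) = 1` for `k ≠ i`, while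
`x i j (v)` is exactly the second term, which is at most `1`.
-/

/-- Lemma 2 of the paper: the maximum over the slice
`Y = {v | ∑ k, v k / vb k = 1 ∧ ∀ k, μ k ≤ v k}` of `min_i max_j x i j (v)`, where
`x i i (v) = (vb i - v i)/(vb i - μ i)` and `x i j (v) = (y i j - v j)/(y i j - vl j)`
for `j ≠ i`, exists and equals
`max{ (N-1)/(N - ∑ k, μ k / vb k), max_i max_{j ≠ i} (y i j - μ j)/(y i j - vl j) }`.
(`vb` is `v̄`, `vl` is the minmax payoff `v̲`.) -/
theorem stmt_4 (N : ℕ) (hN : 2 ≤ N) (vb μ vl : Fin N → ℝ) (y : Fin N → Fin N → ℝ)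
    (hvb : ∀ j, 0 < vb j) (hμ : ∀ j, vl j < μ j ∧ μ j < vb j)
    (hsum : ∑ j, μ j / vb j < 1)
    (hy : ∀ i j, i ≠ j → μ j ≤ y i j ∧ y i j ≤ vb j) :
    IsGreatest
      { m : ℝ | ∃ v : Fin N → ℝ, (∑ k, v k / vb k = 1 ∧ ∀ k, μ k ≤ v k) ∧
          m = ⨅ i, ⨆ j, (if j = i then (vb i - v i) / (vb i - μ i)
                          else (y i j - v j) / (y i j - vl j)) }
      (max (((N : ℝ) - 1) / ((N : ℝ) - ∑ k, μ k / vb k))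
           (⨆ i, ⨆ j : {j : Fin N // j ≠ i},
             (y i j.1 - μ j.1) / (y i j.1 - vl j.1))) := by
  have : NeZero N := ⟨by omega⟩
  have : Nontrivial (Fin N) := Fin.nontrivial_iff_two_le.mpr hN
  have hne : ∀ i : Fin N, Nonempty {j : Fin N // j ≠ i} := fun i =>
    let ⟨j, hj⟩ := exists_ne i
    ⟨⟨j, hj⟩⟩
  have hN' : (2 : ℝ) ≤ N := by exact_mod_cast hN
  have hden : 0 < (N : ℝ) - ∑ k, μ k / vb k := by linarith
  have hgap : ∀ k, 0 < vb k - μ k := fun k => sub_pos.mpr (hμ k).2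
  set c : ℝ := ((N : ℝ) - 1) / ((N : ℝ) - ∑ k, μ k / vb k) with hc
  have hc1 : c ≤ 1 := by rw [hc, div_le_one hden]; linarith
  have hcmul : c * ((N : ℝ) - ∑ k, μ k / vb k) = N - 1 := div_mul_cancel₀ _ hden.ne'
  set T : ℝ := ⨆ i, ⨆ j : {j : Fin N // j ≠ i},
    (y i j.1 - μ j.1) / (y i j.1 - vl j.1) with hT
  have hle : ∀ i j, j ≠ i → (y i j - μ j) / (y i j - vl j) ≤ T := fun i j hj =>
    (le_ciSup (f := fun j : {j : Fin N // j ≠ i} => (y i j.1 - μ j.1) / (y i j.1 - vl j.1))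
      (Set.finite_range _).bddAbove ⟨j, hj⟩).trans
    (le_ciSup (f := fun i => ⨆ j : {j : Fin N // j ≠ i},
      (y i j.1 - μ j.1) / (y i j.1 - vl j.1)) (Set.finite_range _).bddAbove i)
  have hpos : ∀ i j, j ≠ i → 0 < y i j - vl j := fun i j hj => by
    linarith [(hy i j hj.symm).1, (hμ j).1]
  have hupper : ∀ v : Fin N → ℝ, (∑ k, v k / vb k = 1 ∧ ∀ k, μ k ≤ v k) →
      (⨅ i, ⨆ j, (if j = i then (vb i - v i) / (vb i - μ i)
        else (y i j - v j) / (y i j - vl j))) ≤ max c T := by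
    rintro v ⟨hv, hvμ⟩
    -- Averaging with weights `1 - μ i / vb i` yields an index whose diagonal term is at most `c`.
    obtain ⟨i, -, hi⟩ : ∃ i ∈ Finset.univ, 1 - v i / vb i ≤ c * (1 - μ i / vb i) := by
      apply Finset.exists_le_of_sum_le Finset.univ_nonempty
      rw [← Finset.mul_sum, Finset.sum_sub_distrib, Finset.sum_sub_distrib, hv]
      simp only [Finset.sum_const, Finset.card_univ, Fintype.card_fin, nsmul_eq_mul, mul_one]
      exact hcmul.ge
    refine (ciInf_le (Set.finite_range _).bddBelow i).trans (ciSup_le fun j => ?_)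
    split_ifs with hj
    · refine le_max_of_le_left ?_
      rw [div_le_iff₀ (hgap i)]
      have h := mul_le_mul_of_nonneg_right hi (hvb i).le
      have hb := (hvb i).ne'
      have e1 : (1 - v i / vb i) * vb i = vb i - v i := by field_simp
      have e2 : c * (1 - μ i / vb i) * vb i = c * (vb i - μ i) := by field_simp
      linarith
    · refine le_max_of_le_right (le_trans ?_ (hle i j hj))
      exact div_le_div_of_nonneg_right (by linarith [hvμ j]) (hpos i j hj).le
  refine ⟨?_, ?_⟩
  · -- A point of `Y` at which every row has an entry at least `max c T` attains the maximum.
    suffices h : ∃ v : Fin N → ℝ, (∑ k, v k / vb k = 1 ∧ ∀ k, μ k ≤ v k) ∧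
        ∀ i, ∃ j, max c T ≤ (if j = i then (vb i - v i) / (vb i - μ i)
          else (y i j - v j) / (y i j - vl j)) by
      obtain ⟨v, hv, hrow⟩ := h
      refine ⟨v, hv, le_antisymm (le_ciInf fun i => ?_) (hupper v hv)⟩
      obtain ⟨j, hj⟩ := hrow i
      exact hj.trans (le_ciSup (f := fun j => if j = i then (vb i - v i) / (vb i - μ i)
          else (y i j - v j) / (y i j - vl j)) (Set.finite_range _).bddAbove j)
    rcases le_total T c with hTc | hcT
    · rw [max_eq_left hTc]
      refine ⟨fun k => vb k - c * (vb k - μ k), ⟨?_, fun k => ?_⟩, fun i => ⟨i, ?_⟩⟩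
      · have e : ∀ k, (vb k - c * (vb k - μ k)) / vb k = 1 - c * (1 - μ k / vb k) := fun k => by
          have hb := (hvb k).ne'
          field_simp
        simp only [e]
        rw [Finset.sum_sub_distrib, ← Finset.mul_sum, Finset.sum_sub_distrib]
        simp only [Finset.sum_const, Finset.card_univ, Fintype.card_fin, nsmul_eq_mul, mul_one]
        linarith
      · nlinarith [hgap k]
      · rw [if_pos rfl, le_div_iff₀ (hgap i)]
        linarith
    · rw [max_eq_right hcT]
      obtain ⟨i, hi⟩ := exists_eq_ciSup_of_finite (f := fun i => ⨆ j : {j : Fin N // j ≠ i},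
        (y i j.1 - μ j.1) / (y i j.1 - vl j.1))
      obtain ⟨⟨j, hj⟩, hij⟩ := exists_eq_ciSup_of_finite
        (f := fun j : {j : Fin N // j ≠ i} => (y i j.1 - μ j.1) / (y i j.1 - vl j.1))
      have hTeq : (y i j - μ j) / (y i j - vl j) = T := hij.trans hi
      have hT1 : T ≤ 1 := by
        rw [← hTeq, div_le_one (hpos i j hj)]
        linarith [(hμ j).1]
      -- All the slack `1 - ∑ μ / vb` is given to coordinate `i`.
      refine ⟨fun k => μ k + if k = i then vb k * (1 - ∑ l, μ l / vb l) else 0,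
        ⟨?_, fun k => ?_⟩, fun k => ?_⟩
      · have e : ∀ k, (μ k + if k = i then vb k * (1 - ∑ l, μ l / vb l) else 0) / vb k
            = μ k / vb k + if k = i then (1 - ∑ l, μ l / vb l) else 0 := fun k => by
          have hb := (hvb k).ne'
          split_ifs
          · field_simp
          · simp
        simp only [e]
        rw [Finset.sum_add_distrib, Finset.sum_ite_eq' Finset.univ i, if_pos (Finset.mem_univ i)]
        ring
      · beta_reduce
        split_ifs
        · have := mul_pos (hvb k) (sub_pos.mpr hsum)
          linarith
        · simp
      · by_cases hk : k = i
        · subst hk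
          refine ⟨j, ?_⟩
          simp only [if_neg hj, add_zero]
          exact hTeq.ge
        · refine ⟨k, ?_⟩
          simp only [if_true, if_neg hk, add_zero]
          rw [div_self (hgap k).ne']
          exact hT1
  · rintro m ⟨v, hv, rfl⟩
    exact hupper v hv
end

section
/- Let N ≥ 2 be an integer and let v̄, v̲, w, v* : Fin N → ℝ satisfy: v̄ i > 0, v̲ i < v* i ≤ v̄ i, v̲ i < w i ≤ v̄ i for all i, ∑ i, v* i / v̄ i = 1, and ∑ i, v̲ i / v̄ i < 1. Put T = ∑ i, w i / v̄ i and S = ∑ i, v̲ i / v̄ i. Then the minimum, over all μ : Fin N → ℝ with v̲ i ≤ μ i ≤ v* i for all i, of max{ (N-1)/(N - ∑ i, μ i / v̄ i), max_{j} (w j - μ j)/(w j - v̲ j) } exists and equals max{ max_{j} (w j - v* j)/(w j - v̲ j), 2(N-1) / ((N-T) + Real.sqrt((N-T)^2 + 4(T-S)(N-1))) }. -/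
/-!
Write `T = ∑ w i / vb i`, `S = ∑ vl i / vb i`, and consider the quadratic
`q(δ) = (T - S) δ² + (N - T) δ - (N - 1)`. Its positive root, in rationalised form, is
`B = 2(N-1) / ((N-T) + √((N-T)² + 4(T-S)(N-1)))`, and `B < 1` because `q(1) = 1 - S > 0`.

If `μ` attains the value `m`, then `w j - m (w j - vl j) ≤ μ j` for all `j`; dividing by `vb j`,
summing and inserting this in `(N-1)/(N - ∑ μ j / vb j) ≤ m` gives `q(m) ≥ 0`, so `m ≥ B`.
Monotonicity in `μ j ≤ vstar j` gives the other lower bound `A = max_j (w j - vstar j)/(w j - vl j)`.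

Conversely, for `δ = max A B ≤ 1` the choice `μ j = w j - δ (w j - vl j)` is admissible, makes every
ratio `(w j - μ j)/(w j - vl j)` equal to `δ`, and `q(δ) ≥ 0` says that the first term is at most
`δ`. The facts on the quadratic are `posRoot_pos`, `posRoot_eq` and `le_iff_quadratic`.
-/

lemma posRoot_pos {a b c : ℝ} (hb : 0 ≤ b) (ha : 0 < a) (hc : 0 < c) :
    0 < 2 * c / (b + Real.sqrt (b ^ 2 + 4 * a * c)) := by
  have hs : 0 < Real.sqrt (b ^ 2 + 4 * a * c) := Real.sqrt_pos.mpr (by positivity)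
  positivity

lemma posRoot_eq {a b c : ℝ} (hb : 0 ≤ b) (ha : 0 < a) (hc : 0 < c) :
    a * (2 * c / (b + Real.sqrt (b ^ 2 + 4 * a * c))) ^ 2
      + b * (2 * c / (b + Real.sqrt (b ^ 2 + 4 * a * c))) = c := by
  have hs : 0 < Real.sqrt (b ^ 2 + 4 * a * c) := Real.sqrt_pos.mpr (by positivity)
  have hsq : Real.sqrt (b ^ 2 + 4 * a * c) ^ 2 = b ^ 2 + 4 * a * c :=
    Real.sq_sqrt (by positivity)
  generalize Real.sqrt (b ^ 2 + 4 * a * c) = s at *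
  have hne : b + s ≠ 0 := by positivity
  field_simp
  linear_combination -hsq

/-- The quadratic `a x² + b x - c` is increasing on `[0, ∞)`, so its sign at `x` tells the side of
the positive root `r` on which `x` lies. -/
lemma le_iff_quadratic {a b c r x : ℝ} (hb : 0 ≤ b) (ha : 0 < a) (hr : 0 < r) (hx : 0 < x)
    (hroot : a * r ^ 2 + b * r = c) : r ≤ x ↔ c ≤ a * x ^ 2 + b * x := by
  have hfac : a * x ^ 2 + b * x - c = (x - r) * (a * (x + r) + b) := by
    rw [← hroot]; ring
  have hpos : 0 < a * (x + r) + b := by positivity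
  rw [← sub_nonneg, ← sub_nonneg (b := c), hfac]
  exact (mul_nonneg_iff_of_pos_right hpos).symm

/-- Theorem 1 of the paper: with `T = ∑ i, w i / vb i` and `S = ∑ i, vl i / vb i`, the
minimum over admissible lower bounds `μ` (with `vl i ≤ μ i ≤ vstar i`) of
`max{ (N-1)/(N - ∑ i, μ i / vb i), max_j (w j - μ j)/(w j - vl j) }` exists and equals
`max{ max_j (w j - vstar j)/(w j - vl j), 2(N-1)/((N-T) + √((N-T)² + 4(T-S)(N-1))) }`.
(`vb` is the maximum payoff `v̄`, `vl` the minmax payoff `v̲`, `vstar` the target payoff.) -/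
theorem stmt_6 (N : ℕ) (hN : 2 ≤ N) (vb vl w vstar : Fin N → ℝ)
    (hvb : ∀ i, 0 < vb i)
    (hvstar : ∀ i, vl i < vstar i ∧ vstar i ≤ vb i)
    (hw : ∀ i, vl i < w i ∧ w i ≤ vb i)
    (hsumstar : ∑ i, vstar i / vb i = 1)
    (hsumvl : ∑ i, vl i / vb i < 1) :
    IsLeast
      { m : ℝ | ∃ μ : Fin N → ℝ, (∀ i, vl i ≤ μ i ∧ μ i ≤ vstar i) ∧
          m = max (((N : ℝ) - 1) / ((N : ℝ) - ∑ i, μ i / vb i))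
                  (⨆ j, (w j - μ j) / (w j - vl j)) }
      (max (⨆ j, (w j - vstar j) / (w j - vl j))
           (2 * ((N : ℝ) - 1) /
             (((N : ℝ) - ∑ i, w i / vb i) +
               Real.sqrt (((N : ℝ) - ∑ i, w i / vb i) ^ 2 +
                 4 * ((∑ i, w i / vb i) - ∑ i, vl i / vb i) * ((N : ℝ) - 1))))) := by
  have hN' : (2 : ℝ) ≤ N := by exact_mod_cast hN
  have hne : Nonempty (Fin N) := ⟨⟨0, by omega⟩⟩
  have hc : (0 : ℝ) < (N : ℝ) - 1 := by linarith
  have hT : ∑ i, w i / vb i ≤ (N : ℝ) := by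
    calc ∑ i, w i / vb i ≤ ∑ _i : Fin N, (1 : ℝ) :=
          Finset.sum_le_sum fun i _ => (div_le_one (hvb i)).mpr (hw i).2
      _ = N := by simp
  have hST : ∑ i, vl i / vb i < ∑ i, w i / vb i :=
    Finset.sum_lt_sum_of_nonempty Finset.univ_nonempty fun i _ =>
      div_lt_div_of_pos_right (hw i).1 (hvb i)
  have hlin : ∀ δ : ℝ, ∑ i, (w i - δ * (w i - vl i)) / vb i
      = ∑ i, w i / vb i - δ * (∑ i, w i / vb i - ∑ i, vl i / vb i) := by
    intro δ
    rw [← Finset.sum_sub_distrib, Finset.mul_sum, ← Finset.sum_sub_distrib]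
    exact Finset.sum_congr rfl fun i _ => by ring
  have hB0 := posRoot_pos (sub_nonneg.mpr hT) (sub_pos.mpr hST) hc
  have hBeq := posRoot_eq (sub_nonneg.mpr hT) (sub_pos.mpr hST) hc
  set B := 2 * ((N : ℝ) - 1) / (((N : ℝ) - ∑ i, w i / vb i) +
      Real.sqrt (((N : ℝ) - ∑ i, w i / vb i) ^ 2 +
        4 * ((∑ i, w i / vb i) - ∑ i, vl i / vb i) * ((N : ℝ) - 1))) with hB
  have hkey : ∀ x : ℝ, 0 < x → (B ≤ x ↔ _) := fun x hx =>
    le_iff_quadratic (sub_nonneg.mpr hT) (sub_pos.mpr hST) hB0 hx hBeq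
  set S := ∑ i, vl i / vb i
  set T := ∑ i, w i / vb i
  have hd : ∀ j, 0 < w j - vl j := fun j => sub_pos.mpr (hw j).1
  have hbdd : ∀ f : Fin N → ℝ, BddAbove (Set.range f) := fun f => (Set.finite_range f).bddAbove
  constructor
  · set δ := max (⨆ j, (w j - vstar j) / (w j - vl j)) B with hδ
    have hδB : B ≤ δ := le_max_right _ _
    have hδ0 : 0 < δ := hB0.trans_le hδB
    have hδ1 : δ ≤ 1 := by
      refine max_le (ciSup_le fun j => ?_) ((hkey 1 one_pos).mpr (by linarith))
      rw [div_le_one (hd j)]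
      linarith [(hvstar j).1]
    have hδA : ∀ j, w j - vstar j ≤ δ * (w j - vl j) := fun j =>
      (div_le_iff₀ (hd j)).mp ((le_ciSup (hbdd fun j => (w j - vstar j) / (w j - vl j)) j).trans
        (le_max_left _ _ : _ ≤ δ))
    refine ⟨fun j => w j - δ * (w j - vl j), fun j => ⟨?_, by linarith [hδA j]⟩, ?_⟩
    · nlinarith [hd j]
    · have hsup : (⨆ j, (w j - (w j - δ * (w j - vl j))) / (w j - vl j)) = δ := by
        have : ∀ j, (w j - (w j - δ * (w j - vl j))) / (w j - vl j) = δ := fun j => by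
          rw [sub_sub_cancel, mul_div_cancel_right₀ _ (hd j).ne']
        simp only [this, ciSup_const]
      rw [hsup, hlin]
      refine (max_eq_right ?_).symm
      have hq := (hkey δ hδ0).mp hδB
      have hden : 0 < (N : ℝ) - (T - δ * (T - S)) := by
        nlinarith [mul_pos hδ0 (sub_pos.mpr hST)]
      rw [div_le_iff₀ hden]
      linarith
  · rintro m ⟨μ, hμ, rfl⟩
    refine max_le ?_ ?_
    · refine le_max_of_le_right (ciSup_mono (hbdd _) fun j => ?_)
      exact div_le_div_of_nonneg_right (by linarith [(hμ j).2]) (hd j).le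
    · set m := max (((N : ℝ) - 1) / ((N : ℝ) - ∑ i, μ i / vb i))
        (⨆ j, (w j - μ j) / (w j - vl j)) with hm
      have hμ1 : ∑ i, μ i / vb i ≤ 1 := hsumstar ▸
        Finset.sum_le_sum fun i _ => div_le_div_of_nonneg_right (hμ i).2 (hvb i).le
      have hden : 0 < (N : ℝ) - ∑ i, μ i / vb i := by linarith
      have hm1 : ((N : ℝ) - 1) / ((N : ℝ) - ∑ i, μ i / vb i) ≤ m := le_max_left _ _
      have hm0 : 0 < m := (div_pos hc hden).trans_le hm1
      have hμm : ∀ j, w j - m * (w j - vl j) ≤ μ j := fun j => by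
        have := (div_le_iff₀ (hd j)).mp
          ((le_ciSup (hbdd fun j => (w j - μ j) / (w j - vl j)) j).trans
            (le_max_right _ _ : _ ≤ m))
        linarith
      have hsum : T - m * (T - S) ≤ ∑ i, μ i / vb i := hlin m ▸
        Finset.sum_le_sum fun i _ => div_le_div_of_nonneg_right (hμm i) (hvb i).le
      rw [div_le_iff₀ hden] at hm1
      refine (hkey m hm0).mpr ?_
      nlinarith [mul_le_mul_of_nonneg_left hsum hm0.le]
end

section
/- Let N ≥ 1 and, for each i ∈ Fin N, let β i > 0 and ā i > 0, and let μ ∈ ℝ with μ ≥ ∑ j, ā j. Define user i's payoff at an action profile a ∈ ∏ j [0, ā j] by u i (a) = (a i)^{β i} · max(0, μ - ∑ j, a j). Then the maximal profile ā (every user playing ā i) is a Nash equilibrium — i.e., u i (a i, ā_{-i}) ≤ u i (ā) for every i and every a i ∈ [0, ā i] — if and only if ā i ≤ (β i/(1+β i)) · (μ - ∑_{j ≠ i} ā j) for every i. -/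
/-!
With the other users at their maxima, user `i` faces `f x = x ^ b * (c - x)` on `[0, A]`, where
`b = β i`, `A = abar i` and `c = μ - ∑_{j ≠ i} abar j ≥ A`. Since
`f' x = x ^ (b - 1) * (b * c - (1 + b) * x)`, the function `f` increases up to
`m = b / (1 + b) * c` and strictly decreases beyond it. Hence `A` maximizes `f` on `[0, A]` if and
only if `A ≤ m` (`payoff_max_iff`).
-/

theorem hasDerivAt_payoff (b c x : ℝ) (hx : 0 < x) :
    HasDerivAt (fun x : ℝ => x ^ b * (c - x)) (x ^ (b - 1) * (b * c - (1 + b) * x)) x := by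
  have h := (Real.hasDerivAt_rpow_const (x := x) (p := b) (Or.inl hx.ne')).mul
    ((hasDerivAt_id x).const_sub c)
  refine h.congr_deriv ?_
  have hxb : x ^ b = x ^ (b - 1) * x := by
    rw [Real.rpow_sub_one hx.ne', div_mul_cancel₀ _ hx.ne']
  simp only [id]
  rw [hxb]
  ring

theorem continuous_payoff (b c : ℝ) (hb : 0 < b) :
    Continuous (fun x : ℝ => x ^ b * (c - x)) :=
  (Real.continuous_rpow_const hb.le).mul (continuous_const.sub continuous_id)

/-- The one-user problem: the right endpoint `A` maximizes `x ^ b * (c - x)` on `[0, A]` exactly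
when it does not exceed the stationary point `b / (1 + b) * c`. -/
theorem payoff_max_iff (b c A : ℝ) (hb : 0 < b) (hA : 0 < A) (hc : A ≤ c) :
    (∀ x ∈ Set.Icc (0 : ℝ) A, x ^ b * (c - x) ≤ A ^ b * (c - A)) ↔ A ≤ b / (1 + b) * c := by
  have hb1 : 0 < 1 + b := by linarith
  have hm : (1 + b) * (b / (1 + b) * c) = b * c := by field_simp
  constructor
  · intro h
    by_contra! hlt
    have hm0 : 0 < b / (1 + b) * c := mul_pos (div_pos hb hb1) (hA.trans_le hc)
    have hanti : StrictAntiOn (fun x : ℝ => x ^ b * (c - x)) (Set.Icc (b / (1 + b) * c) A) := by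
      refine strictAntiOn_of_deriv_neg (convex_Icc _ _) (continuous_payoff b c hb).continuousOn ?_
      intro x hx
      rw [interior_Icc] at hx
      have hx0 : 0 < x := hm0.trans hx.1
      rw [(hasDerivAt_payoff b c x hx0).deriv]
      have := mul_lt_mul_of_pos_left hx.1 hb1
      exact mul_neg_of_pos_of_neg (Real.rpow_pos_of_pos hx0 _) (by linarith)
    exact absurd (h _ ⟨hm0.le, hlt.le⟩)
      (not_le.mpr (hanti ⟨le_rfl, hlt.le⟩ ⟨hlt.le, le_rfl⟩ hlt))
  · intro h x hx
    have hmono : MonotoneOn (fun x : ℝ => x ^ b * (c - x)) (Set.Icc 0 A) := by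
      refine monotoneOn_of_deriv_nonneg (convex_Icc _ _) (continuous_payoff b c hb).continuousOn
        ?_ ?_ <;> intro y hy <;> rw [interior_Icc] at hy
      · exact (hasDerivAt_payoff b c y hy.1).differentiableAt.differentiableWithinAt
      · rw [(hasDerivAt_payoff b c y hy.1).deriv]
        have := mul_le_mul_of_nonneg_left (hy.2.le.trans h) hb1.le
        exact mul_nonneg (Real.rpow_nonneg hy.1.le _) (by linarith)
    exact hmono hx ⟨hA.le, le_rfl⟩ hx.2

/-- Example 2 of the paper: in the M/M/1 flow control game without intervention (service
rate `μ ≥ ∑ j, abar j`, payoffs `u i a = (a i)^(β i) · max 0 (μ - ∑ j, a j)`), the maximal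
profile `abar` is a Nash equilibrium iff
`abar i ≤ (β i/(1+β i))·(μ - ∑_{j ≠ i} abar j)` for every `i`. -/
theorem stmt_13 (N : ℕ) (hN : 1 ≤ N) (β abar : Fin N → ℝ)
    (hβ : ∀ i, 0 < β i) (habar : ∀ i, 0 < abar i) (μ : ℝ) (hμ : ∑ j, abar j ≤ μ) :
    (∀ i : Fin N, ∀ ai ∈ Set.Icc (0:ℝ) (abar i),
        ai ^ (β i) * max 0 (μ - ∑ j, Function.update abar i ai j) ≤
          (abar i) ^ (β i) * max 0 (μ - ∑ j, abar j)) ↔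
    (∀ i : Fin N, abar i ≤ β i / (1 + β i) * (μ - ∑ j ∈ Finset.univ.erase i, abar j)) := by
  refine forall_congr' fun i => ?_
  have hsum : abar i + ∑ j ∈ Finset.univ.erase i, abar j = ∑ j, abar j :=
    Finset.add_sum_erase _ _ (Finset.mem_univ i)
  have hupd : ∀ x : ℝ, ∑ j, Function.update abar i x j
      = x + ∑ j ∈ Finset.univ.erase i, abar j := by
    intro x
    rw [Finset.sum_update_of_mem (Finset.mem_univ i), Finset.sdiff_singleton_eq_erase]
  rw [← payoff_max_iff (β i) _ (abar i) (hβ i) (habar i) (by linarith)]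
  refine forall₂_congr fun x hx => ?_
  -- The truncation at `0` is inactive because `x ≤ abar i` and `∑ j, abar j ≤ μ`.
  rw [hupd, ← hsum, max_eq_right (by linarith [hx.2]), max_eq_right (by linarith),
    sub_add_eq_sub_sub_swap, sub_add_eq_sub_sub_swap]
end

section
/- Let N ≥ 1, fix a user i ∈ Fin N, and let h i i > 0, h i 0 > 0, h i j ≥ 0 for j ≠ i, n i > 0, ā₀ > 0 and ā j > 0 for all j. Define u i (a₀, a) = Real.logb 2 (1 + (h i i · a i) / (h i 0 · a₀ + ∑_{j ≠ i} h i j · a j + n i)) for a₀ ∈ [0, ā₀] and a j ∈ [0, ā j]. Then the pure-action minmax value min over (a₀, a_{-i}) ∈ [0, ā₀] × ∏_{j ≠ i} [0, ā j] of max over a i ∈ [0, ā i] of u i (a₀, a i, a_{-i}) equals Real.logb 2 (1 + (h i i · ā i) / (h i 0 · ā₀ + ∑_{j ≠ i} h i j · ā j + n i)); moreover this value is strictly decreasing in ā₀. -/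
/-!
The throughput `log₂ (1 + s / d)` is increasing in the signal `s` and decreasing in the
interference-plus-noise `d` (`throughput_le`). So whatever the others do, user `i`'s best response
is full power `abar i`, and the resulting maximum is smallest when the interference is largest,
that is when everybody else also transmits at full power. Strict monotonicity in the intervention
power is the strict version of the dependence on `d`.
-/

theorem throughput_le {s t d e : ℝ} (hs : 0 ≤ s) (hst : s ≤ t) (he : 0 < e) (hed : e ≤ d) :
    Real.logb 2 (1 + s / d) ≤ Real.logb 2 (1 + t / e) := by
  have hd : 0 < d := he.trans_le hed
  have h0 : 0 ≤ s / d := by positivity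
  have h1 : s / d ≤ t / e := div_le_div₀ (hs.trans hst) hst he hed
  exact Real.logb_le_logb_of_le one_lt_two (by linarith) (by linarith)

/-- Minmax computation in the power control game (Example 1): with payoff
`u i (a₀, a) = log₂(1 + hii·aᵢ/(hi0·a₀ + ∑_{j≠i} hij j·a j + ni))`, the pure-action
minmax value `min_{(a₀, a_{-i})} max_{a i} u i` equals
`log₂(1 + hii·abar i/(hi0·abar₀ + ∑_{j≠i} hij j·abar j + ni))`, and this value is
strictly decreasing in the maximum intervention power `abar₀`. -/
theorem stmt_15 (N : ℕ) (hN : 1 ≤ N) (i : Fin N)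
    (hii hi0 ni abar₀ : ℝ) (hij abar : Fin N → ℝ)
    (hhii : 0 < hii) (hhi0 : 0 < hi0) (hhij : ∀ j, j ≠ i → 0 ≤ hij j)
    (hni : 0 < ni) (habar₀ : 0 < abar₀) (habar : ∀ j, 0 < abar j) :
    IsLeast
      { m : ℝ | ∃ a₀ ∈ Set.Icc (0:ℝ) abar₀, ∃ a : Fin N → ℝ,
          (∀ j, j ≠ i → a j ∈ Set.Icc (0:ℝ) (abar j)) ∧
          IsGreatest
            ((fun ai => Real.logb 2 (1 + hii * ai /
                (hi0 * a₀ + (∑ j ∈ Finset.univ.erase i, hij j * a j) + ni))) ''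
              Set.Icc (0:ℝ) (abar i)) m }
      (Real.logb 2 (1 + hii * abar i /
        (hi0 * abar₀ + (∑ j ∈ Finset.univ.erase i, hij j * abar j) + ni))) ∧
    (∀ b b' : ℝ, 0 < b → b < b' →
      Real.logb 2 (1 + hii * abar i /
          (hi0 * b' + (∑ j ∈ Finset.univ.erase i, hij j * abar j) + ni)) <
        Real.logb 2 (1 + hii * abar i /
          (hi0 * b + (∑ j ∈ Finset.univ.erase i, hij j * abar j) + ni))) := by
  -- For any admissible powers of the others, the interference-plus-noise is positive.
  have hpos : ∀ (a₀ : ℝ) (a : Fin N → ℝ), 0 ≤ a₀ → (∀ j, j ≠ i → 0 ≤ a j) →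
      0 < hi0 * a₀ + (∑ j ∈ Finset.univ.erase i, hij j * a j) + ni := by
    intro a₀ a ha₀ ha
    have hsum : 0 ≤ ∑ j ∈ Finset.univ.erase i, hij j * a j :=
      Finset.sum_nonneg fun j hj =>
        mul_nonneg (hhij j (Finset.ne_of_mem_erase hj)) (ha j (Finset.ne_of_mem_erase hj))
    have := mul_nonneg hhi0.le ha₀
    linarith
  refine ⟨⟨?_, ?_⟩, ?_⟩
  · refine ⟨abar₀, ⟨habar₀.le, le_rfl⟩, abar, fun j _ => ⟨(habar j).le, le_rfl⟩,
      ⟨abar i, ⟨(habar i).le, le_rfl⟩, rfl⟩, ?_⟩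
    rintro _ ⟨x, ⟨hx0, hx1⟩, rfl⟩
    exact throughput_le (mul_nonneg hhii.le hx0) (mul_le_mul_of_nonneg_left hx1 hhii.le)
      (hpos _ _ habar₀.le fun j _ => (habar j).le) le_rfl
  · rintro m ⟨a₀, ⟨ha₀, ha₀'⟩, a, ha, -, hm⟩
    -- The maximum `m` is at least the payoff of full power `abar i` against `(a₀, a)`.
    refine le_trans ?_ (hm ⟨abar i, ⟨(habar i).le, le_rfl⟩, rfl⟩)
    refine throughput_le (mul_nonneg hhii.le (habar i).le) le_rfl
      (hpos _ _ ha₀ fun j hj => (ha j hj).1) ?_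
    have hsum : ∑ j ∈ Finset.univ.erase i, hij j * a j ≤
        ∑ j ∈ Finset.univ.erase i, hij j * abar j :=
      Finset.sum_le_sum fun j hj =>
        mul_le_mul_of_nonneg_left (ha j (Finset.ne_of_mem_erase hj)).2
          (hhij j (Finset.ne_of_mem_erase hj))
    have := mul_le_mul_of_nonneg_left ha₀' hhi0.le
    linarith
  · intro b b' hb hbb'
    have hd := hpos b abar hb.le fun j _ => (habar j).le
    have hd' := hpos b' abar (hb.trans hbb').le fun j _ => (habar j).le
    have hs : 0 < hii * abar i := mul_pos hhii (habar i)
    have hmul := mul_lt_mul_of_pos_left hbb' hhi0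
    refine Real.logb_lt_logb one_lt_two (add_pos one_pos (div_pos hs hd')) ?_
    have := div_lt_div_of_pos_left hs hd
      (show _ < hi0 * b' + (∑ j ∈ Finset.univ.erase i, hij j * abar j) + ni by linarith)
    linarith
end

section
/- Let N ≥ 2 be an integer, δ ∈ (0,1), and let v̄, μ, v̲ : Fin N → ℝ with v̄ k > 0 and 0 ≤ μ k < v̄ k for all k. Fix i ∈ Fin N, and for each j ≠ i let y j ∈ ℝ with y j > v̲ j. Let v : Fin N → ℝ satisfy ∑ k, v k / v̄ k = 1 and v k ≥ μ k for all k. Assume δ ≥ (v̄ i - v i)/(v̄ i - μ i) and δ ≥ (y j - v j)/(y j - v̲ j) for all j ≠ i. Define γ : Fin N → ℝ by γ i = v̄ i - (v̄ i - v i)/δ and γ j = v j / δ for j ≠ i, and define u : Fin N → ℝ by u i = v̄ i and u j = 0 for j ≠ i. Then: (a) v k = (1-δ)·u k + δ·γ k for all k; (b) ∑ k, γ k / v̄ k = 1; (c) μ k ≤ γ k ≤ v̄ k for all k; and (d) v j ≥ (1-δ)·y j + δ·v̲ j for all j ≠ i. -/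
/-!
Since `u / vb` is the indicator of `i`, it lies on the hyperplane `∑ k, x k / vb k = 1`; as `v`
lies there too and `v = (1 - δ) u + δ γ` with `δ ≠ 0`, so does `γ`. The lower bound `μ ≤ γ` is the
first discount-factor condition at `i`, and follows from `0 ≤ v j ≤ v j / δ` elsewhere. The upper
bound comes for free: the terms `γ k / vb k` are nonnegative and sum to `1`, so each is at most `1`.
The incentive constraint is the second discount-factor condition with its denominator cleared.
-/

/-- Explicit pure-action decomposition in the proof of Lemma 2: a payoff `v` in the
candidate self-generating set `Y = {x | ∑ k, x k / vb k = 1 ∧ ∀ k, μ k ≤ x k}` is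
decomposed by the stage payoff `u = vb i · e i` (only user `i` active) and continuation
payoff `γ` staying in `Y`, and the incentive constraint `(d)` against the deviation
payoffs `y j` and minmax payoffs `vl j` holds, provided the discount factor is large
enough. -/
theorem stmt_17 (N : ℕ) (hN : 2 ≤ N) (δ : ℝ) (hδ : δ ∈ Set.Ioo (0:ℝ) 1)
    (vb μ vl : Fin N → ℝ) (hvb : ∀ k, 0 < vb k) (hμ : ∀ k, 0 ≤ μ k ∧ μ k < vb k)
    (i : Fin N) (y : Fin N → ℝ) (hy : ∀ j, j ≠ i → vl j < y j)
    (v : Fin N → ℝ) (hvsum : ∑ k, v k / vb k = 1) (hvμ : ∀ k, μ k ≤ v k)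
    (hδ1 : (vb i - v i) / (vb i - μ i) ≤ δ)
    (hδ2 : ∀ j, j ≠ i → (y j - v j) / (y j - vl j) ≤ δ)
    (γ u : Fin N → ℝ)
    (hγ : γ i = vb i - (vb i - v i) / δ ∧ ∀ j, j ≠ i → γ j = v j / δ)
    (hu : u i = vb i ∧ ∀ j, j ≠ i → u j = 0) :
    (∀ k, v k = (1 - δ) * u k + δ * γ k) ∧
    (∑ k, γ k / vb k = 1) ∧
    (∀ k, μ k ≤ γ k ∧ γ k ≤ vb k) ∧
    (∀ j, j ≠ i → v j ≥ (1 - δ) * y j + δ * vl j) := by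
  obtain ⟨hδ0, hδlt⟩ := hδ
  obtain ⟨hγi, hγj⟩ := hγ
  obtain ⟨hui, huj⟩ := hu
  have hdec : ∀ k, v k = (1 - δ) * u k + δ * γ k := by
    intro k
    rcases eq_or_ne k i with rfl | hk
    · rw [hui, hγi]
      field_simp
      ring
    · rw [huj k hk, hγj k hk]
      field_simp
      ring
  have husum : ∑ k, u k / vb k = 1 := by
    rw [Finset.sum_eq_single i (fun j _ hj => by rw [huj j hj, zero_div]) (by simp), hui,
      div_self (hvb i).ne']
  have hγsum : ∑ k, γ k / vb k = 1 := by
    have h : ∑ k, v k / vb k = (1 - δ) * ∑ k, u k / vb k + δ * ∑ k, γ k / vb k := by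
      rw [Finset.mul_sum, Finset.mul_sum, ← Finset.sum_add_distrib]
      refine Finset.sum_congr rfl fun k _ => ?_
      rw [hdec k]
      ring
    rw [hvsum, husum] at h
    exact mul_left_cancel₀ hδ0.ne' (by linarith)
  have hlow : ∀ k, μ k ≤ γ k := by
    intro k
    rcases eq_or_ne k i with rfl | hk
    · rw [div_le_iff₀ (sub_pos.2 (hμ k).2)] at hδ1
      have h : (vb k - v k) / δ ≤ vb k - μ k := by
        rw [div_le_iff₀ hδ0]
        linarith
      rw [hγi]
      linarith
    · rw [hγj k hk]
      exact (hvμ k).trans (le_div_self ((hμ k).1.trans (hvμ k)) hδ0 hδlt.le)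
  refine ⟨hdec, hγsum, fun k => ⟨hlow k, ?_⟩, fun j hj => ?_⟩
  · have h : γ k / vb k ≤ ∑ l, γ l / vb l :=
      Finset.single_le_sum (f := fun l => γ l / vb l)
        (fun l _ => div_nonneg ((hμ l).1.trans (hlow l)) (hvb l).le) (Finset.mem_univ k)
    rwa [hγsum, div_le_one (hvb k)] at h
  · have h := hδ2 j hj
    rw [div_le_iff₀ (sub_pos.2 (hy j hj))] at h
    linarith
end
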